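/- Let M be an n-manifold containing a subset A that is dense in some Euclidean subset U of M and such that NH(x) ≠ ∅ for every x ∈ A. Then M is not quasi-compact. In particular, no everywhere non-Hausdorff n-manifold is quasi-compact. -/

import Mathlib

open Set Topology TopologicalSpace

universe u

/-- Two points are inseparable (`x ⋈ y`): distinct, and every open set containing
one meets every open set containing the other. -/
def Bump {X : Type u} [TopologicalSpace X] (x y : X) : Prop :=
  x ≠ y ∧ ∀ U V : Set X, IsOpen U → IsOpen V → x ∈ U → y ∈ V → (U ∩ V).Nonempty

/-- `NH A` = points inseparable from some point of `A`. -/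
def NH {X : Type u} [TopologicalSpace X] (A : Set X) : Set X :=
  {y | ∃ x ∈ A, Bump y x}

/-- `NHpt x = NH {x}`. -/
def NHpt {X : Type u} [TopologicalSpace X] (x : X) : Set X := NH {x}

/-- An Euclidean subset: open and homeomorphic to ℝⁿ. -/
def IsEuclidean {X : Type u} [TopologicalSpace X] (n : ℕ) (U : Set X) : Prop :=
  IsOpen U ∧ Nonempty (U ≃ₜ EuclideanSpace ℝ (Fin n))

/-- An `n`-manifold: nonempty connected space, every point has an open
neighborhood homeomorphic to ℝⁿ (Hausdorffness NOT assumed). -/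
def IsNManifold (X : Type u) [TopologicalSpace X] (n : ℕ) : Prop :=
  ConnectedSpace X ∧ ∀ x : X, ∃ U : Set X, x ∈ U ∧ IsEuclidean n U

/-- Locally Hausdorff space. -/
def LocallyHausdorff (X : Type u) [TopologicalSpace X] : Prop :=
  ∀ x : X, ∃ U : Set X, IsOpen U ∧ x ∈ U ∧ T2Space U

/-- Quasi-countably-compact subset: every countable open cover has a finite subcover. -/
def QuasiCountablyCompact {X : Type u} [TopologicalSpace X] (K : Set X) : Prop :=
  ∀ U : ℕ → Set X, (∀ n, IsOpen (U n)) → K ⊆ ⋃ n, U n →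
    ∃ s : Finset ℕ, K ⊆ ⋃ n ∈ s, U n

/-- `A` is `κ`-Baire in `X`: not covered by fewer than `κ` nowhere dense sets. -/
def KappaBaire {X : Type u} [TopologicalSpace X] (κ : Cardinal.{u}) (A : Set X) : Prop :=
  ∀ (ι : Type u) (F : ι → Set X), Cardinal.mk ι < κ →
    (∀ i, IsNowhereDense (F i)) → ¬ A ⊆ ⋃ i, F i

/-- `S` is a scan of `A` in `X`. -/
def IsScan {X : Type u} [TopologicalSpace X] (S A : Set X) : Prop :=
  S ⊆ NH A ∧ ∀ x ∈ A, ((NHpt x).Nonempty ↔ (NHpt x ∩ S).Nonempty)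

/-- `U` is sorted: a continuous map from `closure U` to a Hausdorff space,
injective on `U`. -/
def IsSorted {X : Type u} [TopologicalSpace X] (U : Set X) : Prop :=
  ∃ (H : Type u) (tH : TopologicalSpace H) (f : closure U → H),
    @T2Space H tH ∧ @Continuous _ H _ tH f ∧
      ∀ a b : closure U, (a : X) ∈ U → (b : X) ∈ U → f a = f b → a = b

/-- `U` is weakly sorted: a continuous map from `closure U` to a Hausdorff space,
finite-to-one on `U`. -/
def IsWeaklySorted {X : Type u} [TopologicalSpace X] (U : Set X) : Prop :=
  ∃ (H : Type u) (tH : TopologicalSpace H) (f : closure U → H),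
    @T2Space H tH ∧ @Continuous _ H _ tH f ∧
      ∀ h : H, {a : closure U | (a : X) ∈ U ∧ f a = h}.Finite

/-- H-maximal: open Hausdorff, with no open Hausdorff proper superset. -/
def IsHMaximal {X : Type u} [TopologicalSpace X] (U : Set X) : Prop :=
  IsOpen U ∧ T2Space U ∧
    ∀ V : Set X, IsOpen V → T2Space V → U ⊆ V → V = U

/-- CH-maximal: connected open Hausdorff, with no connected open Hausdorff
proper superset. -/
def IsCHMaximal {X : Type u} [TopologicalSpace X] (U : Set X) : Prop :=
  IsConnected U ∧ IsOpen U ∧ T2Space U ∧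
    ∀ V : Set X, IsConnected V → IsOpen V → T2Space V → U ⊆ V → V = U

/-- `U` is f-simple at `p`: every open `V ∋ p` contains an open `W ∋ p` such that
`W ∩ U` has finitely many connected components. -/
def FSimpleAt {X : Type u} [TopologicalSpace X] (U : Set X) (p : X) : Prop :=
  ∀ V : Set X, IsOpen V → p ∈ V → ∃ W : Set X, IsOpen W ∧ p ∈ W ∧ W ⊆ V ∧
    {C : Set X | ∃ z ∈ W ∩ U, C = connectedComponentIn (W ∩ U) z}.Finite

/-- f-rim-simple: f-simple at every boundary point. -/
def FRimSimple {X : Type u} [TopologicalSpace X] (U : Set X) : Prop :=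
  ∀ p ∈ closure U \ U, FSimpleAt U p

/-- cov(ℳ): least cardinality of a family of nowhere dense subsets of ℝ covering ℝ. -/
noncomputable def covMeager : Cardinal :=
  sInf {c : Cardinal | ∃ (ι : Type) (F : ι → Set ℝ),
    Cardinal.mk ι = c ∧ (∀ i, IsNowhereDense (F i)) ∧ ⋃ i, F i = Set.univ}

/-- A locally compact first countable S-space: Hausdorff, regular, locally compact,
first countable, hereditarily separable, not Lindelöf. -/
def IsLCFCSSpace (S : Type) [TopologicalSpace S] : Prop :=
  T2Space S ∧ RegularSpace S ∧ LocallyCompactSpace S ∧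
    FirstCountableTopology S ∧ (∀ A : Set S, SeparableSpace A) ∧ ¬ LindelofSpace S

/-!
If `V` is open and Hausdorff, a point inseparable from a point of `V` lies in the closure of `V`
but not in `V`, so `NH V` is contained in the frontier of `V`, which is nowhere dense. Covering a
quasi-compact set `K` of a locally Hausdorff space by finitely many such `V` shows that `NH K` is
nowhere dense. If the whole space is quasi-compact, the points that are inseparable from some other
point therefore form a nowhere dense set, which cannot be dense in a nonempty open set.
-/

section NowhereDense

variable {X : Type*} [TopologicalSpace X] {s t : Set X}

theorem isNowhereDense_union (hs : IsNowhereDense s) (ht : IsNowhereDense t) :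
    IsNowhereDense (s ∪ t) := by
  rw [IsNowhereDense, closure_union,
    interior_union_isClosed_of_interior_empty isClosed_closure ht]
  exact hs

theorem isNowhereDense_frontier_of_isOpen (hs : IsOpen s) : IsNowhereDense (frontier s) := by
  rw [IsNowhereDense, isClosed_frontier.closure_eq, ← frontier_compl]
  exact interior_frontier hs.isClosed_compl

theorem not_subset_closure_of_isNowhereDense (hs : IsNowhereDense s) (ht : IsOpen t)
    (htne : t.Nonempty) : ¬ t ⊆ closure s := fun hts =>
  (htne.mono (interior_maximal hts ht)).ne_empty hs

end NowhereDense

section Inseparable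

variable {X : Type u} [TopologicalSpace X] {x y : X} {V A B : Set X}

theorem Bump.symm (h : Bump x y) : Bump y x :=
  ⟨h.1.symm, fun U W hU hW hy hx => inter_comm W U ▸ h.2 W U hW hU hx hy⟩

theorem not_bump [T2Space X] (x y : X) : ¬ Bump x y := fun ⟨hne, h⟩ =>
  let ⟨U, W, hU, hW, hx, hy, hUW⟩ := t2_separation hne
  (h U W hU hW hx hy).ne_empty hUW.inter_eq

theorem Bump.of_isOpenEmbedding {Y : Type*} [TopologicalSpace Y] {f : X → Y}
    (hf : IsOpenEmbedding f) (h : Bump (f x) (f y)) : Bump x y := by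
  refine ⟨fun hxy => h.1 (congrArg f hxy), fun U W hU hW hx hy => ?_⟩
  have himage : (f '' U ∩ f '' W).Nonempty :=
    h.2 _ _ (hf.isOpenMap U hU) (hf.isOpenMap W hW) (mem_image_of_mem f hx) (mem_image_of_mem f hy)
  rwa [← image_inter hf.injective, image_nonempty] at himage

theorem Bump.notMem_of_t2Space (h : Bump x y) (hV : IsOpen V) [T2Space V] (hy : y ∈ V) :
    x ∉ V := fun hx =>
  not_bump (⟨x, hx⟩ : V) ⟨y, hy⟩ (Bump.of_isOpenEmbedding hV.isOpenEmbedding_subtypeVal h)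

theorem Bump.mem_closure (h : Bump x y) (hV : IsOpen V) (hy : y ∈ V) : x ∈ closure V :=
  mem_closure_iff.2 fun W hW hx => h.2 W V hW hV hx hy

theorem NH_subset_frontier (hV : IsOpen V) [T2Space V] : NH V ⊆ frontier V := by
  rintro x ⟨y, hy, h⟩
  rw [hV.frontier_eq]
  exact ⟨h.mem_closure hV hy, h.notMem_of_t2Space hV hy⟩

theorem NH_empty : NH (∅ : Set X) = ∅ := by
  simp [NH]

theorem NH_mono (h : A ⊆ B) : NH A ⊆ NH B := fun _ ⟨x, hx, hyx⟩ => ⟨x, h hx, hyx⟩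

theorem NH_union : NH (A ∪ B) = NH A ∪ NH B := by
  ext y
  simp only [NH, mem_ofPred_eq, mem_union, or_and_right, exists_or]

theorem mem_NHpt : y ∈ NHpt x ↔ Bump y x := by
  simp [NHpt, NH]

theorem mem_NH_univ : x ∈ NH univ ↔ (NHpt x).Nonempty :=
  ⟨fun ⟨y, _, hxy⟩ => ⟨y, mem_NHpt.2 hxy.symm⟩,
    fun ⟨y, hy⟩ => ⟨y, mem_univ y, (mem_NHpt.1 hy).symm⟩⟩

theorem LocallyHausdorff.isNowhereDense_NH (hX : LocallyHausdorff X) {K : Set X}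
    (hK : IsCompact K) : IsNowhereDense (NH K) := by
  refine hK.induction_on (p := fun s => IsNowhereDense (NH s)) ?empty ?mono ?union ?nhds
  case empty => simpa only [NH_empty] using isNowhereDense_empty
  case mono => exact fun s t hst ht => ht.mono (NH_mono hst)
  case union => exact fun s t hs ht => by simpa only [NH_union] using isNowhereDense_union hs ht
  case nhds =>
    intro x _
    obtain ⟨V, hV, hxV, _⟩ := hX x
    exact ⟨V, mem_nhdsWithin_of_mem_nhds (hV.mem_nhds hxV),
      (isNowhereDense_frontier_of_isOpen hV).mono (NH_subset_frontier hV)⟩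

end Inseparable

section Manifold

variable {X : Type u} [TopologicalSpace X] {n : ℕ} {U : Set X}

theorem IsEuclidean.nonempty (hU : IsEuclidean n U) : U.Nonempty :=
  let ⟨e⟩ := hU.2
  ⟨e.symm 0, (e.symm 0).2⟩

theorem IsEuclidean.t2Space (hU : IsEuclidean n U) : T2Space U :=
  let ⟨e⟩ := hU.2
  e.symm.t2Space

theorem IsNManifold.locallyHausdorff (hX : IsNManifold X n) : LocallyHausdorff X := fun x =>
  let ⟨U, hxU, hU⟩ := hX.2 x
  ⟨U, hU.1, hxU, hU.t2Space⟩

end Manifold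

theorem stmt14_general {X : Type u} [TopologicalSpace X] (hX : LocallyHausdorff X)
    {U A : Set X} (hU : IsOpen U) (hUne : U.Nonempty) (hdense : U ⊆ closure A)
    (hA : ∀ x ∈ A, (NHpt x).Nonempty) : ¬ IsCompact (univ : Set X) := fun hcompact =>
  have hA_subset : A ⊆ NH univ := fun x hx => mem_NH_univ.2 (hA x hx)
  not_subset_closure_of_isNowhereDense ((hX.isNowhereDense_NH hcompact).mono hA_subset)
    hU hUne hdense

/-- A manifold containing a subset `A` dense in an Euclidean subset
with `NH(x) ≠ ∅` for all `x ∈ A` is not quasi-compact; in particular no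
everywhere non-Hausdorff manifold is quasi-compact. -/
theorem stmt14 {M : Type u} [TopologicalSpace M] (n : ℕ) (hM : IsNManifold M n)
    (U A : Set M) (hU : IsEuclidean n U) (hAU : A ⊆ U) (hdense : U ⊆ closure A)
    (hA : ∀ x ∈ A, (NHpt x).Nonempty) :
    ¬ IsCompact (Set.univ : Set M) ∧
      ∀ (N : Type u) (_ : TopologicalSpace N), IsNManifold N n →
        (∀ x : N, (NHpt x).Nonempty) → ¬ IsCompact (Set.univ : Set N) :=
  ⟨stmt14_general hM.locallyHausdorff hU.1 hU.nonempty hdense hA, fun _ _ hN hNH =>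
    stmt14_general hN.locallyHausdorff isOpen_univ (@univ_nonempty _ hN.1.toNonempty)
      subset_closure fun x _ => hNH x⟩
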